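/- For all integers r, s, k with 1 ≤ r ≤ s and 0 ≤ k ≤ r−1, the identity of integers C(r+s−k−1, k) · D_{k+1}(r, s) = C(r+s−2k−2, s−k−1) · D_k(r,s) holds. -/

import Mathlib

/-!
The determinant `D_k(r, s)` has a closed product form. With `a = r - k` and `b = s - k` its matrix
has entries `C(a + b, b + i - j)`. Left multiplication by the unitriangular Pascal matrix
`C(i, l)` turns it, by Vandermonde's convolution, into `C(a + b + i, a + j)`
(`pascal_mul_binomMat`). Up to the row factors `(a + b + i)! / (b + i)!` and the column factors
`1 / (a + j)!` the latter entries are the falling factorials of `b + i` of length `j`, monic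
polynomials of degree `j` in `b + i`, so the remaining determinant is the Vandermonde determinant
of consecutive integers, `∏ i!`. Hence (`det_binomMat`)
`D_k * ∏ (a + i)! (b + i)! = ∏ (a + b + i)! i!`, all products over `i < k`, and the claimed
identity follows by comparing these products for `(a, b, k)` and `(a - 1, b - 1, k + 1)`.
-/

/-- The `k × k` integer matrix whose `(i, j)` entry is the binomial coefficient
`C(r + s - 2k, s + i - j - k)`, where `C(a, b) = 0` if `b < 0` or `b > a`. -/
def Dmat (r s k : ℕ) : Matrix (Fin k) (Fin k) ℤ :=
  Matrix.of fun i j =>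
    if (j : ℕ) + k ≤ s + (i : ℕ) then
      ((r + s - 2 * k).choose (s + (i : ℕ) - (j : ℕ) - k) : ℤ)
    else 0

/-- The determinant `D_k(r, s)`. -/
def Ddet (r s k : ℕ) : ℤ := (Dmat r s k).det

open Finset Nat

/-- The matrix `C(a + b, b + i - j)`, with binomial coefficients of negative lower index equal
to `0`; it is the matrix of `D_k(a + k, b + k)`. -/
def binomMat (a b k : ℕ) : Matrix (Fin k) (Fin k) ℤ :=
  Matrix.of fun i j =>
    if (j : ℕ) ≤ b + (i : ℕ) then ((a + b).choose (b + (i : ℕ) - (j : ℕ)) : ℤ) else 0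

lemma Ddet_eq_det_binomMat (a b k : ℕ) : Ddet (a + k) (b + k) k = (binomMat a b k).det := by
  unfold Ddet
  congr 1
  ext i j
  simp only [Dmat, binomMat, Matrix.of_apply]
  rw [show a + k + (b + k) - 2 * k = a + b by omega,
    show b + k + (i : ℕ) - j - k = b + i - j by omega]
  congr 1
  apply propext
  omega

/-- The same entry through the complementary lower index; the truncated subtraction is harmless
in both forms because the binomial coefficient vanishes beyond `a + b`. -/
lemma binomMat_entry (a b l j : ℕ) :
    (if j ≤ b + l then (a + b).choose (b + l - j) else 0) =
      if l ≤ a + j then (a + b).choose (a + j - l) else 0 := by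
  split_ifs with h1 h2 h2
  · exact Nat.choose_symm_of_eq_add (by omega)
  · exact Nat.choose_eq_zero_of_lt (by omega)
  · exact (Nat.choose_eq_zero_of_lt (by omega)).symm
  · rfl

lemma sum_choose_mul (a b k i j : ℕ) (hi : i < k) :
    ∑ l ∈ range k, i.choose l * (if j ≤ b + l then (a + b).choose (b + l - j) else 0) =
      (a + b + i).choose (a + j) := by
  rw [sum_congr rfl fun l _ => congrArg (i.choose l * ·) (binomMat_entry a b l j),
    Nat.add_comm (a + b) i, Nat.add_choose_eq,
    Finset.Nat.sum_antidiagonal_eq_sum_range_succ_mk]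
  -- Both sums extend to a common larger range, where the added terms vanish.
  have h1 : ∀ l ∈ range (k + (a + j + 1)), l ∉ range k →
      i.choose l * (if l ≤ a + j then (a + b).choose (a + j - l) else 0) = 0 := by
    intro l _ hl
    rw [mem_range] at hl
    rw [Nat.choose_eq_zero_of_lt (by omega : i < l), zero_mul]
  have h2 : ∀ l ∈ range (k + (a + j + 1)), l ∉ range (a + j + 1) →
      i.choose l * (if l ≤ a + j then (a + b).choose (a + j - l) else 0) = 0 := by
    intro l _ hl
    rw [mem_range] at hl
    rw [if_neg (by omega), mul_zero]
  rw [sum_subset (range_subset_range.2 (by omega)) h1,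
    ← sum_subset (range_subset_range.2 (by omega)) h2]
  refine sum_congr rfl fun l hl => ?_
  rw [mem_range] at hl
  rw [if_pos (by omega)]

lemma pascal_mul_binomMat (a b k : ℕ) :
    (Matrix.of fun i l : Fin k => (((i : ℕ).choose l : ℕ) : ℤ)) * binomMat a b k =
      Matrix.of fun i j : Fin k => (((a + b + i).choose (a + j) : ℕ) : ℤ) := by
  ext i j
  simp only [Matrix.mul_apply, binomMat, Matrix.of_apply]
  rw [← sum_choose_mul a b k i j i.2, ← Fin.sum_univ_eq_sum_range
    (fun l => (i : ℕ).choose l * (if (j : ℕ) ≤ b + l then (a + b).choose (b + l - j) else 0))]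
  push_cast
  rfl

lemma det_pascal (k : ℕ) :
    (Matrix.of fun i l : Fin k => (((i : ℕ).choose l : ℕ) : ℤ)).det = 1 := by
  rw [Matrix.det_of_isLowerTriangular]
  · simp
  · intro i l h
    simp only [Matrix.of_apply]
    exact_mod_cast Nat.choose_eq_zero_of_lt (show (i : ℕ) < l from h)

lemma det_descFactorial (b k : ℕ) :
    (Matrix.of fun i j : Fin k => (((b + i).descFactorial j : ℕ) : ℤ)).det =
      ∏ i ∈ range k, ((i ! : ℕ) : ℤ) := by
  have h := Matrix.det_eval_matrixOfPolynomials_eq_det_vandermonde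
    (fun i : Fin k => ((b + i : ℕ) : ℤ)) (fun j => descPochhammer ℤ j)
    (fun j => descPochhammer_natDegree ℤ j) (fun j => monic_descPochhammer ℤ j)
  simp only [descPochhammer_eval_eq_descFactorial] at h
  rw [← h]
  have h2 : (Matrix.vandermonde fun i : Fin k => ((b + i : ℕ) : ℤ)).det =
      (Matrix.vandermonde fun i : Fin k => ((i : ℕ) : ℤ)).det := by
    simp [Matrix.det_vandermonde]
  rw [h2]
  cases k with
  | zero => simp
  | succ n =>
    rw [Matrix.det_vandermonde_id_eq_superFactorial, ← Nat.prod_range_succ_factorial]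
    push_cast
    rfl

lemma choose_mul_factorials (a b i j : ℕ) :
    (b + i)! * ((a + j)! * (a + b + i).choose (a + j)) =
      (a + b + i)! * (b + i).descFactorial j := by
  rcases le_or_gt j (b + i) with h | h
  · have h1 := Nat.choose_mul_factorial_mul_factorial (show a + j ≤ a + b + i by omega)
    rw [show a + b + i - (a + j) = b + i - j by omega] at h1
    rw [← Nat.factorial_mul_descFactorial h, ← h1]
    ring
  · rw [Nat.choose_eq_zero_of_lt (by omega), Nat.descFactorial_eq_zero_iff_lt.2 h]
    simp

/-- MacMahon's product formula, cleared of denominators. -/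
lemma det_binomMat (a b k : ℕ) :
    (∏ i ∈ range k, (((b + i)! : ℕ) : ℤ)) *
        ((∏ i ∈ range k, (((a + i)! : ℕ) : ℤ)) * (binomMat a b k).det) =
      (∏ i ∈ range k, (((a + b + i)! : ℕ) : ℤ)) * ∏ i ∈ range k, ((i ! : ℕ) : ℤ) := by
  have h := congrArg Matrix.det (pascal_mul_binomMat a b k)
  rw [Matrix.det_mul, det_pascal, one_mul] at h
  rw [h, ← det_descFactorial b k,
    ← Fin.prod_univ_eq_prod_range (fun i => (((b + i)! : ℕ) : ℤ)),
    ← Fin.prod_univ_eq_prod_range (fun i => (((a + i)! : ℕ) : ℤ)),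
    ← Fin.prod_univ_eq_prod_range (fun i => (((a + b + i)! : ℕ) : ℤ)),
    ← Matrix.det_mul_row, ← Matrix.det_mul_column, ← Matrix.det_mul_column]
  congr 1
  ext i j
  simp only [Matrix.of_apply]
  exact_mod_cast choose_mul_factorials a b i j

/-- The identity in the variables `A = r - k - 1`, `B = s - k - 1`. -/
lemma choose_mul_det_binomMat (A B k : ℕ) :
    ((A + B + 1 + k).choose k : ℤ) * (binomMat A B (k + 1)).det =
      ((A + B).choose B : ℤ) * (binomMat (A + 1) (B + 1) k).det := by
  have h1 := det_binomMat A B (k + 1)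
  have h2 := det_binomMat (A + 1) (B + 1) k
  have hshift : ∀ c : ℕ, ∏ i ∈ range (k + 1), (((c + i)! : ℕ) : ℤ) =
      (∏ i ∈ range k, (((c + 1 + i)! : ℕ) : ℤ)) * ((c ! : ℕ) : ℤ) := by
    intro c
    rw [prod_range_succ']
    simp [add_comm, add_left_comm]
  rw [hshift A, hshift B, hshift (A + B), prod_range_succ (fun i => ((i ! : ℕ) : ℤ))] at h1
  -- Both ways of splitting `∏ i < k + 1, (A + B + 1 + i)!`: off the bottom and off the top.
  have h3 := hshift (A + B + 1)
  rw [prod_range_succ] at h3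
  rw [show A + 1 + (B + 1) = A + B + 1 + 1 by ring] at h2
  have c1 : ((A + B + 1 + k).choose k : ℤ) * (k ! : ℕ) * ((A + B + 1)! : ℕ) =
      ((A + B + 1 + k)! : ℕ) := by
    have := Nat.choose_mul_factorial_mul_factorial (show k ≤ A + B + 1 + k by omega)
    rw [show A + B + 1 + k - k = A + B + 1 by omega] at this
    exact_mod_cast this
  have c2 : ((A + B).choose B : ℤ) * (B ! : ℕ) * (A ! : ℕ) = ((A + B)! : ℕ) := by
    have := Nat.choose_mul_factorial_mul_factorial (show B ≤ A + B by omega)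
    rw [show A + B - B = A by omega] at this
    exact_mod_cast this
  have hP : ∀ c : ℕ, (∏ i ∈ range k, (((c + i)! : ℕ) : ℤ)) ≠ 0 := fun c =>
    prod_ne_zero_iff.2 fun i _ => by exact_mod_cast Nat.factorial_ne_zero _
  have hf : ∀ n : ℕ, ((n ! : ℕ) : ℤ) ≠ 0 := fun n => by exact_mod_cast Nat.factorial_ne_zero n
  have hA := hP (A + 1)
  have hB := hP (B + 1)
  generalize (∏ i ∈ range k, (((A + 1 + i)! : ℕ) : ℤ)) = PA at *
  generalize (∏ i ∈ range k, (((B + 1 + i)! : ℕ) : ℤ)) = PB at *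
  generalize (∏ i ∈ range k, (((A + B + 1 + i)! : ℕ) : ℤ)) = T at *
  generalize (∏ i ∈ range k, (((A + B + 1 + 1 + i)! : ℕ) : ℤ)) = R at *
  generalize (∏ i ∈ range k, ((i ! : ℕ) : ℤ)) = S at *
  generalize (binomMat A B (k + 1)).det = M' at *
  generalize (binomMat (A + 1) (B + 1) k).det = M at *
  have hne := mul_ne_zero (mul_ne_zero (mul_ne_zero hA hB) (mul_ne_zero (hf A) (hf B)))
    (mul_ne_zero (hf k) (hf (A + B + 1)))
  generalize ((A ! : ℕ) : ℤ) = fA at *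
  generalize ((B ! : ℕ) : ℤ) = fB at *
  generalize ((k ! : ℕ) : ℤ) = fk at *
  generalize (((A + B)! : ℕ) : ℤ) = fAB at *
  generalize (((A + B + 1)! : ℕ) : ℤ) = fAB1 at *
  generalize (((A + B + 1 + k)! : ℕ) : ℤ) = fABk at *
  generalize ((A + B + 1 + k).choose k : ℤ) = C1 at *
  generalize ((A + B).choose B : ℤ) = C2 at *
  apply mul_left_cancel₀ hne
  linear_combination C1 * fk * fAB1 * h1 - C2 * fA * fB * fk * fAB1 * h2
    + T * fAB * S * fk * c1 + S * fk * fAB * h3 - R * S * fk * fAB1 * c2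

/-- `C(r+s−k−1, k) · D_{k+1}(r, s) = C(r+s−2k−2, s−k−1) · D_k(r,s)`. -/
theorem stmt_15 (r s k : ℕ) (hr : 1 ≤ r) (hrs : r ≤ s) (hkr : k ≤ r - 1) :
    ((r + s - k - 1).choose k : ℤ) * Ddet r s (k + 1) =
      ((r + s - 2 * k - 2).choose (s - k - 1) : ℤ) * Ddet r s k := by
  obtain ⟨A, rfl⟩ : ∃ A, r = A + (k + 1) := ⟨r - (k + 1), by omega⟩
  obtain ⟨B, rfl⟩ : ∃ B, s = B + (k + 1) := ⟨s - (k + 1), by omega⟩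
  rw [show A + (k + 1) + (B + (k + 1)) - k - 1 = A + B + 1 + k by omega,
    show A + (k + 1) + (B + (k + 1)) - 2 * k - 2 = A + B by omega,
    show B + (k + 1) - k - 1 = B by omega, Ddet_eq_det_binomMat,
    show A + (k + 1) = A + 1 + k by ring, show B + (k + 1) = B + 1 + k by ring,
    Ddet_eq_det_binomMat]
  exact choose_mul_det_binomMat A B k
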